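/- arXiv:1503.01961 — 2 statements merged into one kernel-verified Lean document; each statement's English description precedes it below -/
import Mathlib

section
/- Let 1 < p < ∞ with Hölder conjugate q, and suppose W : ℝ^m × ℝ^n → ℂ^{N×N} is a matrix weight satisfying the product Roudenko A_p condition: there is C < ∞ such that for every product set E = B × B' of balls, ∫_E (∫_E ‖W^{1/p}(z) W^{−1/p}(z')‖^q dz'/|E|)^{p/q} dz/|E| ≤ C. If p ≤ q, then for almost every y ∈ ℝ^n, the weight x ↦ W(x,y) satisfies the Roudenko A_p condition on ℝ^m with the same constant C: for every ball B ⊂ ℝ^m, ∫_B (∫_B ‖W^{1/p}(x,y) W^{−1/p}(x',y)‖^q dx'/|B|)^{p/q} dx/|B| ≤ C. -/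
open MeasureTheory ENNReal ComplexInnerProductSpace
open scoped ComplexOrder

/-- The real power `A ^ s` of a Hermitian matrix, via the functional calculus
(junk value `0` if `A` is not Hermitian). -/
noncomputable def mpow {N : ℕ} (A : Matrix (Fin N) (Fin N) ℂ) (s : ℝ) :
    Matrix (Fin N) (Fin N) ℂ :=
  if hA : A.IsHermitian then hA.cfc (fun x => x ^ s) else 0

/-!
The mean over `B × B_ε(y)` is a mean over `B` and the unit ball, of the weight evaluated at
`(x, y + ε u)`. By continuity of translations in `L¹`, along a sequence `ε → 0` the weight at
`(x, y + ε u)` converges to the weight at `(x, y)` for almost every `(x, y, u)`. Fatou's lemma,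
applied to the inner and then to the outer integral, passes the bound to the slice at height `y`.
-/

open Filter Function Metric Set Topology
open scoped ProbabilityTheory

section Measurability

variable {α β γ : Type*} [MeasurableSpace α] [TopologicalSpace β]

theorem measurable_uncurry_comp_of_continuous [TopologicalSpace γ]
    [TopologicalSpace.PseudoMetrizableSpace γ] [MeasurableSpace γ] [BorelSpace γ]
    {k : β → β → γ} (hk : Continuous (uncurry k)) {V : α → β} (hV : StronglyMeasurable V) :
    Measurable (uncurry fun a a' => k (V a) (V a')) :=
  (hk.comp_stronglyMeasurable ((hV.comp_measurable measurable_fst).prodMk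
    (hV.comp_measurable measurable_snd))).measurable

theorem aestronglyMeasurable_comp_of_continuousOn {P : Measure α}
    [TopologicalSpace.PseudoMetrizableSpace β] [SecondCountableTopology β] [TopologicalSpace γ]
    {f : α → β} {g : β → γ} {s : Set β}
    (hf : AEStronglyMeasurable f P) (hfs : ∀ᵐ a ∂P, f a ∈ s) (hg : ContinuousOn g s) :
    AEStronglyMeasurable (fun a => g (f a)) P := by
  borelize β
  rcases s.eq_empty_or_nonempty with rfl | hs
  · obtain rfl : P = 0 := by simpa using hfs
    exact aestronglyMeasurable_zero_measure _
  · obtain ⟨f', hf', hf's, hff'⟩ := hf.aemeasurable.exists_ae_eq_range_subset hfs hs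
    have hf'_restrict : StronglyMeasurable fun a => (⟨f' a, hf's ⟨a, rfl⟩⟩ : s) :=
      hf'.subtype_mk.stronglyMeasurable
    exact ⟨_, hg.domRestrict.comp_stronglyMeasurable hf'_restrict,
      hff'.mono fun a ha => congrArg g ha⟩

end Measurability

section Conditioning

variable {α β : Type*} [MeasurableSpace α] [MeasurableSpace β]

theorem isProbabilityMeasure_cond_ball [PseudoMetricSpace α] [ProperSpace α] (μ : Measure α)
    [μ.IsOpenPosMeasure] [IsFiniteMeasureOnCompacts μ] (a : α) {ε : ℝ}
    (hε : 0 < ε) : IsProbabilityMeasure μ[|ball a ε] :=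
  ProbabilityTheory.cond_isProbabilityMeasure_of_finite (measure_ball_pos μ a hε).ne'
    measure_ball_lt_top.ne

theorem cond_prod (μ : Measure α) (ν : Measure β) [SFinite μ] [SFinite ν] {s : Set α}
    {t : Set β} (hs : μ s ≠ ∞) (ht : ν t ≠ ∞) : (μ.prod ν)[|s ×ˢ t] = μ[|s].prod ν[|t] := by
  simp only [ProbabilityTheory.cond, Measure.prod_smul_left, Measure.prod_smul_right,
    Measure.prod_restrict, Measure.prod_prod, smul_smul, ENNReal.mul_inv (.inr ht) (.inl hs),
    mul_comm]

end Conditioning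

section RoudenkoMean

variable {α β : Type*} [MeasurableSpace α] [MeasurableSpace β]

/-- The iterated mean `∫ (∫ K(z, z') dP(z'))^r dP(z)` of a kernel. With `P = μ[|E]` the normalized
restriction of `μ` to `E`, `r = p / q` and `K(z, z') = ‖W^{1/p}(z) W^{-1/p}(z')‖^q`, it is the
quantity bounded in Roudenko's `A_p` condition. -/
noncomputable def roudenkoMean (r : ℝ) (P : Measure α) (K : α → α → ℝ≥0∞) : ℝ≥0∞ :=
  ∫⁻ z, (∫⁻ z', K z z' ∂P) ^ r ∂P

theorem roudenkoMean_cond (r : ℝ) (μ : Measure α) (E : Set α) (K : α → α → ℝ≥0∞) :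
    roudenkoMean r μ[|E] K =
      (∫⁻ z in E, ((∫⁻ z' in E, K z z' ∂μ) / μ E) ^ r ∂μ) / μ E := by
  simp only [roudenkoMean, ProbabilityTheory.cond, lintegral_smul_measure, smul_eq_mul,
    ENNReal.div_eq_inv_mul]

theorem roudenkoMean_congr_ae (r : ℝ) {P : Measure α} {K K' : α → α → ℝ≥0∞}
    (h : ∀ᵐ z ∂P, ∀ᵐ z' ∂P, K z z' = K' z z') : roudenkoMean r P K = roudenkoMean r P K' :=
  lintegral_congr_ae (h.mono fun _ hz => congrArg (· ^ r) (lintegral_congr_ae hz))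

theorem roudenkoMean_comp_congr_ae {M : Type*} (r : ℝ) {P : Measure α} {V V' : α → M}
    (k : M → M → ℝ≥0∞) (h : V =ᵐ[P] V') :
    roudenkoMean r P (fun z z' => k (V z) (V z')) =
      roudenkoMean r P (fun z z' => k (V' z) (V' z')) :=
  roudenkoMean_congr_ae r (h.mono fun z hz => h.mono fun z' hz' => by rw [hz, hz'])

theorem roudenkoMean_comp (r : ℝ) {P : Measure α} {Q : Measure β} [SFinite Q] {T : α → β}
    (hT : MeasurePreserving T P Q) {K : β → β → ℝ≥0∞} (hK : Measurable (uncurry K)) :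
    roudenkoMean r P (fun z z' => K (T z) (T z')) = roudenkoMean r Q K := by
  simp only [roudenkoMean, hT.lintegral_comp hK.of_uncurry_left]
  exact hT.lintegral_comp (hK.lintegral_prod_right'.pow_const r)

theorem roudenkoMean_le_liminf {r : ℝ} (hr : 0 ≤ r) {P : Measure α} [SFinite P]
    {K : ℕ → α → α → ℝ≥0∞} {K₀ : α → α → ℝ≥0∞} (hK : ∀ n, Measurable (uncurry (K n)))
    (hlim : ∀ᵐ z ∂P, ∀ᵐ z' ∂P, Tendsto (fun n => K n z z') atTop (𝓝 (K₀ z z'))) :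
    roudenkoMean r P K₀ ≤ liminf (fun n => roudenkoMean r P (K n)) atTop := by
  have inner_le : ∀ᵐ z ∂P,
      ∫⁻ z', K₀ z z' ∂P ≤ liminf (fun n => ∫⁻ z', K n z z' ∂P) atTop := by
    filter_upwards [hlim] with z hz
    calc ∫⁻ z', K₀ z z' ∂P
        = ∫⁻ z', liminf (fun n => K n z z') atTop ∂P :=
          lintegral_congr_ae (hz.mono fun _ hz' => hz'.liminf_eq.symm)
      _ ≤ liminf (fun n => ∫⁻ z', K n z z' ∂P) atTop :=
          lintegral_liminf_le fun n => (hK n).of_uncurry_left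
  calc roudenkoMean r P K₀
      ≤ ∫⁻ z, (liminf (fun n => ∫⁻ z', K n z z' ∂P) atTop) ^ r ∂P :=
        lintegral_mono_ae (inner_le.mono fun _ hz => ENNReal.rpow_le_rpow hz hr)
    _ = ∫⁻ z, liminf (fun n => (∫⁻ z', K n z z' ∂P) ^ r) atTop ∂P :=
        lintegral_congr fun _ => (ENNReal.monotone_rpow_of_nonneg hr).map_liminf_of_continuousAt
          _ ENNReal.continuous_rpow_const.continuousAt
    _ ≤ liminf (fun n => roudenkoMean r P (K n)) atTop :=
        lintegral_liminf_le fun n => (hK n).lintegral_prod_right'.pow_const r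

end RoudenkoMean

section Translation

variable {M : Type*} [NormedAddCommGroup M]

theorem eLpNorm_comp_add_sub_le {G : Type*} [AddGroup G] [MeasurableSpace G] [MeasurableAdd G]
    {μ : Measure G} [μ.IsAddRightInvariant] {p : ℝ≥0∞} (hp : 1 ≤ p) {f : G → M}
    (hf : AEStronglyMeasurable f μ) (v : G) :
    eLpNorm (fun z => f (z + v) - f z) p μ ≤ 2 * eLpNorm f p μ := by
  have hv : MeasurePreserving (· + v) μ μ := measurePreserving_add_right μ v
  calc eLpNorm (fun z => f (z + v) - f z) p μ
      ≤ eLpNorm (f ∘ (· + v)) p μ + eLpNorm f p μ :=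
        eLpNorm_sub_le (hf.comp_measurePreserving hv) hf hp
    _ = 2 * eLpNorm f p μ := by rw [eLpNorm_comp_measurePreserving hf hv, two_mul]

theorem tendsto_eLpNorm_comp_add_sub {G : Type*} [AddCommGroup G] [TopologicalSpace G]
    [IsTopologicalAddGroup G] [MeasurableSpace G] [BorelSpace G] {μ : Measure G}
    [IsLocallyFiniteMeasure μ] [μ.InnerRegularCompactLTTop] [μ.IsAddLeftInvariant]
    {p : ℝ≥0∞} (hp : 1 ≤ p) (hp' : p ≠ ∞) {f : G → M}
    (hf : MemLp f p μ) :
    Tendsto (fun v => eLpNorm (fun z => f (z + v) - f z) p μ) (𝓝 0) (𝓝 0) := by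
  have : Fact (1 ≤ p) := ⟨hp⟩
  have : Fact (p ≠ ∞) := ⟨hp'⟩
  have hcont : Continuous fun v : G => edist (DomAddAct.mk v +ᵥ hf.toLp f) (hf.toLp f) := by
    fun_prop
  simpa [DomAddAct.mk_vadd_toLp, Lp.edist_toLp_toLp, add_comm, Pi.sub_def, comp_def]
    using hcont.tendsto 0

variable {G Ω ι : Type*} [NormedAddCommGroup G] [NormedSpace ℝ G] [FiniteDimensional ℝ G]
  [MeasurableSpace G] [BorelSpace G] {μ : Measure G} [μ.IsAddHaarMeasure]
  [MeasurableSpace Ω] {P : Measure Ω} [IsFiniteMeasure P]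
  {l : Filter ι} [l.IsCountablyGenerated] {φ : ι → Ω → G}

theorem tendsto_eLpNorm_prod_comp_add_sub {f : G → M} (hf : StronglyMeasurable f)
    (hfi : MemLp f 1 μ) (hφ : ∀ i, Measurable (φ i)) (hlim : ∀ᵐ ω ∂P, Tendsto (φ · ω) l (𝓝 0)) :
    Tendsto (fun i => eLpNorm (fun w : G × Ω => f (w.1 + φ i w.2) - f w.1) 1 (μ.prod P))
      l (𝓝 0) := by
  have hmeas (i : ι) : Measurable fun w : G × Ω => ‖f (w.1 + φ i w.2) - f w.1‖ₑ :=
    ((hf.comp_measurable (by fun_prop)).sub (hf.comp_measurable measurable_fst)).enorm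
  have hFubini (i : ι) : eLpNorm (fun w : G × Ω => f (w.1 + φ i w.2) - f w.1) 1 (μ.prod P) =
      ∫⁻ ω, eLpNorm (fun z => f (z + φ i ω) - f z) 1 μ ∂P := by
    simp only [eLpNorm_one_eq_lintegral_enorm]
    exact lintegral_prod_symm' _ (hmeas i)
  simp only [hFubini]
  rw [← lintegral_zero (μ := P)]
  refine tendsto_lintegral_filter_of_dominated_convergence (fun _ => 2 * eLpNorm f 1 μ)
    (.of_forall fun i => ?_)
    (.of_forall fun i => .of_forall fun ω =>
      eLpNorm_comp_add_sub_le le_rfl hf.aestronglyMeasurable (φ i ω))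
    (lintegral_const_lt_top (ENNReal.mul_ne_top ofNat_ne_top hfi.eLpNorm_ne_top)).ne
    (hlim.mono fun _ hω => (tendsto_eLpNorm_comp_add_sub le_rfl one_ne_top hfi).comp hω)
  simpa only [eLpNorm_one_eq_lintegral_enorm] using (hmeas i).lintegral_prod_left'

theorem tendstoInMeasure_comp_add {f : G → M} (hf : StronglyMeasurable f) (hfi : MemLp f 1 μ)
    (hφ : ∀ i, Measurable (φ i)) (hlim : ∀ᵐ ω ∂P, Tendsto (φ · ω) l (𝓝 0)) :
    TendstoInMeasure (μ.prod P) (fun i w => f (w.1 + φ i w.2)) l (fun w => f w.1) :=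
  tendstoInMeasure_of_tendsto_eLpNorm one_ne_zero
    (fun _ => (hf.comp_measurable (by fun_prop)).aestronglyMeasurable)
    (hf.comp_measurable measurable_fst).aestronglyMeasurable
    (tendsto_eLpNorm_prod_comp_add_sub hf hfi hφ hlim)

theorem exists_seq_ae_tendsto_comp_add [NormedSpace ℝ M] [l.NeBot] {V : G → M}
    (hV : StronglyMeasurable V) (hφ : ∀ i, Measurable (φ i))
    (hlim : ∀ᵐ ω ∂P, Tendsto (φ · ω) l (𝓝 0)) :
    ∃ i : ℕ → ι, Tendsto i atTop l ∧ ∀ᵐ w ∂μ.prod P,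
      Tendsto (fun n => V (w.1 + φ (i n) w.2)) atTop (𝓝 (V w.1)) := by
  -- Compressing `V` into the unit ball and damping it by the integrable weight `g` puts it in `L¹`;
  -- both operations are undone continuously.
  let bdd : M → M := fun v => (Homeomorph.unitBall v : M)
  have hbdd : IsInducing bdd := IsInducing.subtypeVal.comp Homeomorph.unitBall.isInducing
  have hbdd_le (v : M) : ‖bdd v‖ ≤ 1 := (mem_ball_zero_iff.1 (Homeomorph.unitBall v).2).le
  let g : G → ℝ := fun z => (1 + ‖z‖) ^ (-(Module.finrank ℝ G + 1 : ℝ))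
  have hg : Continuous g := (continuous_const.add continuous_norm).rpow_const fun z =>
    .inl (add_pos_of_pos_of_nonneg one_pos (norm_nonneg z)).ne'
  have hg_pos (z : G) : 0 < g z := by positivity
  have hg_int : Integrable g μ := integrable_one_add_norm (lt_add_one _)
  have hbV : StronglyMeasurable (bdd ∘ V) := hbdd.continuous.comp_stronglyMeasurable hV
  let f : G → M := fun z => g z • bdd (V z)
  have hf : StronglyMeasurable f := hg.stronglyMeasurable.smul hbV
  have hf_int : MemLp f 1 μ := memLp_one_iff_integrable.2 <|
    hg_int.smul_bdd 1 hbV.aestronglyMeasurable (.of_forall fun _ => hbdd_le _)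
  obtain ⟨i, hi, hconv⟩ := (tendstoInMeasure_comp_add hf hf_int hφ hlim).exists_seq_tendsto_ae'
  refine ⟨i, hi, ?_⟩
  filter_upwards [hconv, Measure.quasiMeasurePreserving_snd.ae hlim] with w hw hw0
  have hshift : Tendsto (fun n => w.1 + φ (i n) w.2) atTop (𝓝 w.1) := by
    simpa using (hw0.comp hi).const_add w.1
  have hg_inv : Tendsto (fun n => (g (w.1 + φ (i n) w.2))⁻¹) atTop (𝓝 (g w.1)⁻¹) :=
    ((hg.tendsto _).comp hshift).inv₀ (hg_pos _).ne'
  have hf_inv (z : G) : (g z)⁻¹ • f z = bdd (V z) := inv_smul_smul₀ (hg_pos z).ne' _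
  rw [hbdd.tendsto_nhds_iff]
  simpa only [hf_inv, comp_def] using hg_inv.smul hw

end Translation

section Slice

variable {X Y M : Type*}
  [NormedAddCommGroup X] [NormedSpace ℝ X] [FiniteDimensional ℝ X]
  [MeasurableSpace X] [BorelSpace X] {μ : Measure X} [μ.IsAddHaarMeasure]
  [NormedAddCommGroup Y] [NormedSpace ℝ Y] [FiniteDimensional ℝ Y]
  [MeasurableSpace Y] [BorelSpace Y] {ν : Measure Y} [ν.IsAddHaarMeasure]

theorem measurePreserving_add_smul_cond_ball (y : Y) {ε : ℝ} (hε : 0 < ε) :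
    MeasurePreserving (fun u => y + ε • u) ν[|ball 0 1] ν[|ball y ε] := by
  set T : Y → Y := fun u => y + ε • u
  have hT : Measurable T := by fun_prop
  obtain ⟨κ, hκ₀, hκ, hscale⟩ : ∃ κ : ℝ≥0∞, κ ≠ 0 ∧ κ ≠ ∞ ∧ ∀ s, ν (T ⁻¹' s) = κ * ν s := by
    refine ⟨.ofReal |(ε ^ Module.finrank ℝ Y)⁻¹|, ?_, ofReal_ne_top, fun s => ?_⟩
    · exact (ofReal_pos.2 (by positivity)).ne'
    · rw [← measure_preimage_add ν y s, ← Measure.addHaar_preimage_smul ν hε.ne', preimage_preimage]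
  have hball : T ⁻¹' ball y ε = ball 0 1 := by
    ext u
    simp [T, norm_smul, abs_of_pos hε, mul_lt_iff_lt_one_right hε]
  refine ⟨hT, Measure.ext fun s hs => ?_⟩
  rw [Measure.map_apply hT hs, ProbabilityTheory.cond_apply measurableSet_ball,
    ProbabilityTheory.cond_apply measurableSet_ball, ← hball, ← preimage_inter, hscale, hscale,
    ENNReal.mul_inv (.inl hκ₀) (.inl hκ), mul_mul_mul_comm, ENNReal.inv_mul_cancel hκ₀ hκ, one_mul]

variable [NormedAddCommGroup M] [NormedSpace ℝ M]

theorem exists_seq_ae_ae_tendsto_add_smul (Q : Measure Y) [IsFiniteMeasure Q] {V : X × Y → M}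
    (hV : StronglyMeasurable V) :
    ∃ ε : ℕ → ℝ, Tendsto ε atTop (𝓝[>] 0) ∧ ∀ᵐ y ∂ν, ∀ᵐ w ∂μ.prod Q,
      Tendsto (fun n => V (w.1, y + ε n • w.2)) atTop (𝓝 (V (w.1, y))) := by
  have hlim (u : Y) : Tendsto (fun ε : ℝ => ((0 : X), ε • u)) (𝓝[>] 0) (𝓝 0) := by
    have : Continuous fun ε : ℝ => ((0 : X), ε • u) := by fun_prop
    simpa [← Prod.zero_eq_mk] using (this.tendsto 0).mono_left nhdsWithin_le_nhds
  obtain ⟨ε, hε, hconv⟩ := exists_seq_ae_tendsto_comp_add (μ := μ.prod ν) (P := Q)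
    (φ := fun (ε : ℝ) u => ((0 : X), ε • u)) hV (fun _ => by fun_prop) (.of_forall hlim)
  have hperm : MeasurePreserving (fun v : Y × X × Y => ((v.2.1, v.1), v.2.2))
      (ν.prod (μ.prod Q)) ((μ.prod ν).prod Q) :=
    (Measure.measurePreserving_swap.prod (.id Q)).comp (measurePreserving_prodAssoc ν μ Q).symm
  have hconv' := Measure.ae_ae_of_ae_prod (hperm.quasiMeasurePreserving.ae hconv)
  exact ⟨ε, hε, by simpa only [Prod.mk_add_mk, add_zero] using hconv'⟩

theorem ae_roudenkoMean_slice_le_of_stronglyMeasurable {V : X × Y → M}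
    (hV : StronglyMeasurable V) {k : M → M → ℝ≥0∞} (hk : Continuous (uncurry k)) {r : ℝ}
    (hr : 0 ≤ r) :
    ∀ᵐ y ∂ν, ∀ (P : Measure X) [SFinite P], P ≪ μ → ∀ C : ℝ≥0∞,
      (∀ ε > 0, roudenkoMean r (P.prod ν[|ball y ε]) (fun z z' => k (V z) (V z')) ≤ C) →
        roudenkoMean r P (fun x x' => k (V (x, y)) (V (x', y))) ≤ C := by
  have := isProbabilityMeasure_cond_ball ν 0 one_pos
  obtain ⟨ε, hε, hconv⟩ := exists_seq_ae_ae_tendsto_add_smul (μ := μ) (ν := ν) ν[|ball 0 1] hV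
  filter_upwards [hconv] with y hy P _ hP C hC
  have hlim : ∀ᵐ w ∂P.prod ν[|ball 0 1],
      Tendsto (fun n => V (w.1, y + ε n • w.2)) atTop (𝓝 (V (w.1, y))) :=
    (hP.prod .rfl).ae_le hy
  have hε_pos : ∀ᶠ n in atTop, 0 < ε n := (tendsto_nhdsWithin_iff.1 hε).2
  have hVy : StronglyMeasurable fun x => V (x, y) := hV.comp_measurable (by fun_prop)
  have hVε (n : ℕ) : StronglyMeasurable fun w : X × Y => V (w.1, y + ε n • w.2) :=
    hV.comp_measurable (by fun_prop)
  calc roudenkoMean r P (fun x x' => k (V (x, y)) (V (x', y)))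
      = roudenkoMean r (P.prod ν[|ball 0 1]) (fun w w' => k (V (w.1, y)) (V (w'.1, y))) :=
        (roudenkoMean_comp r measurePreserving_fst
          (measurable_uncurry_comp_of_continuous hk hVy)).symm
    _ ≤ liminf (fun n => roudenkoMean r (P.prod ν[|ball 0 1])
          fun w w' => k (V (w.1, y + ε n • w.2)) (V (w'.1, y + ε n • w'.2))) atTop :=
        roudenkoMean_le_liminf hr
          (fun n => measurable_uncurry_comp_of_continuous hk (hVε n))
          (hlim.mono fun w hw => hlim.mono fun w' hw' =>
            (hk.tendsto (V (w.1, y), V (w'.1, y))).comp (hw.prodMk_nhds hw'))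
    _ ≤ liminf (fun _ : ℕ => C) atTop := by
        refine liminf_le_liminf (hε_pos.mono fun n hn => ?_)
        have hscale := (MeasurePreserving.id P).prod
          (measurePreserving_add_smul_cond_ball (ν := ν) y hn)
        have := isProbabilityMeasure_cond_ball ν y hn
        exact (roudenkoMean_comp r hscale
          (measurable_uncurry_comp_of_continuous hk hV)).trans_le (hC _ hn)
    _ = C := liminf_const C

theorem ae_roudenkoMean_slice_le {V : X × Y → M}
    (hV : AEStronglyMeasurable V (μ.prod ν)) {k : M → M → ℝ≥0∞} (hk : Continuous (uncurry k))
    {r : ℝ} (hr : 0 ≤ r) :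
    ∀ᵐ y ∂ν, ∀ (P : Measure X) [SFinite P], P ≪ μ → ∀ C : ℝ≥0∞,
      (∀ ε > 0, roudenkoMean r (P.prod ν[|ball y ε]) (fun z z' => k (V z) (V z')) ≤ C) →
        roudenkoMean r P (fun x x' => k (V (x, y)) (V (x', y))) ≤ C := by
  have hslice : ∀ᵐ y ∂ν, ∀ᵐ x ∂μ, V (x, y) = hV.mk V (x, y) :=
    Measure.ae_ae_of_ae_prod
      (Measure.measurePreserving_swap.quasiMeasurePreserving.ae hV.ae_eq_mk)
  filter_upwards [ae_roudenkoMean_slice_le_of_stronglyMeasurable (μ := μ) (ν := ν)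
    hV.stronglyMeasurable_mk hk hr, hslice] with y hy hVy P _ hP C hC
  rw [roudenkoMean_comp_congr_ae r k (hP.ae_le hVy)]
  refine hy P hP C fun ε hε => ?_
  have hVball : V =ᵐ[P.prod ν[|ball y ε]] hV.mk V :=
    (hP.prod ProbabilityTheory.cond_absolutelyContinuous).ae_le hV.ae_eq_mk
  exact (roudenkoMean_comp_congr_ae r k hVball).symm.trans_le (hC ε hε)

end Slice

section MatrixPower

open scoped Matrix.Norms.L2Operator

variable {N : ℕ}

theorem continuousOn_mpow (s : ℝ) :
    ContinuousOn (fun A : Matrix (Fin N) (Fin N) ℂ => mpow A s) {A | A.PosDef} := by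
  have hspec : (⋃ A ∈ {A : Matrix (Fin N) (Fin N) ℂ | A.PosDef}, spectrum ℝ A) ⊆ Ioi 0 := by
    refine iUnion₂_subset fun A hA => ?_
    rw [hA.isHermitian.spectrum_real_eq_range_eigenvalues]
    exact range_subset_iff.2 hA.eigenvalues_pos
  refine (ContinuousOn.cfc_of_mem_nhdsSet (p := IsSelfAdjoint) (· ^ s)
    (isOpen_Ioi.mem_nhdsSet.2 hspec) continuousOn_id (fun _ hA => hA.isHermitian)
    fun x hx => (Real.continuousAt_rpow_const x s (.inl hx.ne')).continuousWithinAt).congr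
    fun A hA => ?_
  simp only [mpow, hA.isHermitian, dif_pos, Matrix.IsHermitian.cfc_eq]

theorem continuous_matrix_mul_nnnorm_rpow (q : ℝ) :
    Continuous (uncurry fun A B : Matrix (Fin N) (Fin N) ℂ × Matrix (Fin N) (Fin N) ℂ =>
      (‖Matrix.toEuclideanCLM (𝕜 := ℂ) (A.1 * B.2)‖₊ : ℝ≥0∞) ^ q) := by
  simp only [← Matrix.cstar_nnnorm_def]
  exact ENNReal.continuous_rpow_const.comp (ENNReal.continuous_coe.comp (by fun_prop))

theorem roudenko_product_implies_uniform_slice_general {X Y : Type*}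
    [NormedAddCommGroup X] [NormedSpace ℝ X] [FiniteDimensional ℝ X]
    [MeasurableSpace X] [BorelSpace X] (μ : Measure X) [μ.IsAddHaarMeasure]
    [NormedAddCommGroup Y] [NormedSpace ℝ Y] [FiniteDimensional ℝ Y]
    [MeasurableSpace Y] [BorelSpace Y] (ν : Measure Y) [ν.IsAddHaarMeasure]
    {q r s t : ℝ} (hr : 0 ≤ r) {W : X × Y → Matrix (Fin N) (Fin N) ℂ}
    (hW : AEStronglyMeasurable W (μ.prod ν)) (hWpos : ∀ᵐ z ∂μ.prod ν, (W z).PosDef) {C : ℝ≥0∞}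
    (hRoudenko : ∀ (c : X) (ρ₁ : ℝ) (c' : Y) (ρ₂ : ℝ), 0 < ρ₁ → 0 < ρ₂ →
      roudenkoMean r (μ.prod ν)[|ball c ρ₁ ×ˢ ball c' ρ₂] (fun z z' =>
        (‖Matrix.toEuclideanCLM (𝕜 := ℂ) (mpow (W z) s * mpow (W z') t)‖₊ : ℝ≥0∞) ^ q) ≤ C) :
    ∀ᵐ y ∂ν, ∀ (c : X) (ρ₁ : ℝ), 0 < ρ₁ →
      roudenkoMean r μ[|ball c ρ₁] (fun x x' =>
        (‖Matrix.toEuclideanCLM (𝕜 := ℂ) (mpow (W (x, y)) s * mpow (W (x', y)) t)‖₊ : ℝ≥0∞) ^ q)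
          ≤ C := by
  have hpow (u : ℝ) : AEStronglyMeasurable (fun z => mpow (W z) u) (μ.prod ν) :=
    aestronglyMeasurable_comp_of_continuousOn hW hWpos (continuousOn_mpow u)
  filter_upwards [ae_roudenkoMean_slice_le ((hpow s).prodMk (hpow t))
    (continuous_matrix_mul_nnnorm_rpow q) hr] with y hy c ρ₁ hρ₁
  refine hy μ[|ball c ρ₁] ProbabilityTheory.cond_absolutelyContinuous C fun ε hε => ?_
  rw [← cond_prod μ ν measure_ball_lt_top.ne measure_ball_lt_top.ne]
  exact hRoudenko c ρ₁ y ε hρ₁ hε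

end MatrixPower

/-- If `W` satisfies the product Roudenko `A_p` condition on `ℝ^m × ℝ^n` with constant `C`
and `p ≤ q`, then for a.e. `y` the weight `x ↦ W(x,y)` satisfies the Roudenko `A_p`
condition on `ℝ^m` with the same constant. -/
theorem roudenko_product_implies_uniform_slice
    {m n N : ℕ} (p q : ℝ) (hp : 1 < p) (hpq : 1 / p + 1 / q = 1) (hpleq : p ≤ q)
    (W : EuclideanSpace ℝ (Fin m) × EuclideanSpace ℝ (Fin n) → Matrix (Fin N) (Fin N) ℂ)
    (hWmeas : ∀ i j, Measurable fun z => W z i j)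
    (hWpos : ∀ᵐ z, (W z).PosDef)
    (C : ℝ) (hC : 0 ≤ C)
    (hRoudenko : ∀ (c : EuclideanSpace ℝ (Fin m)) (ρ₁ : ℝ) (c' : EuclideanSpace ℝ (Fin n))
        (ρ₂ : ℝ), 0 < ρ₁ → 0 < ρ₂ →
        (∫⁻ z in (Metric.ball c ρ₁) ×ˢ (Metric.ball c' ρ₂),
            ((∫⁻ z' in (Metric.ball c ρ₁) ×ˢ (Metric.ball c' ρ₂),
                (‖Matrix.toEuclideanCLM (𝕜 := ℂ)
                    (mpow (W z) (1 / p) * mpow (W z') (-(1 / p)))‖₊ : ℝ≥0∞) ^ q) /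
              volume ((Metric.ball c ρ₁) ×ˢ (Metric.ball c' ρ₂))) ^ (p / q)) /
          volume ((Metric.ball c ρ₁) ×ˢ (Metric.ball c' ρ₂)) ≤ ENNReal.ofReal C) :
    ∀ᵐ y : EuclideanSpace ℝ (Fin n),
      ∀ (c : EuclideanSpace ℝ (Fin m)) (ρ₁ : ℝ), 0 < ρ₁ →
        (∫⁻ x in Metric.ball c ρ₁,
            ((∫⁻ x' in Metric.ball c ρ₁,
                (‖Matrix.toEuclideanCLM (𝕜 := ℂ)
                    (mpow (W (x, y)) (1 / p) * mpow (W (x', y)) (-(1 / p)))‖₊ : ℝ≥0∞) ^ q) /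
              volume (Metric.ball c ρ₁)) ^ (p / q)) /
          volume (Metric.ball c ρ₁) ≤ ENNReal.ofReal C := by
  have hq : 0 < q := by linarith
  have hWstrong : StronglyMeasurable (β := Fin N → Fin N → ℂ) W :=
    (measurable_pi_iff.2 fun i => measurable_pi_iff.2 (hWmeas i)).stronglyMeasurable
  simp only [← roudenkoMean_cond] at hRoudenko ⊢
  exact roudenko_product_implies_uniform_slice_general volume volume (by positivity)
    hWstrong.aestronglyMeasurable hWpos hRoudenko
end

section
/- Let 1 < p < ∞, let w be a scalar weight on a measure space D, let W be a measurable a.e.-positive-definite N×N matrix weight on D, let r : D → ℂ^N be a unit vector field with w^{1/p}‖W^{−1/p} r‖ ≤ C a.e. Then for every f ∈ L^p(W) and every ψ ∈ L^q(w) (q the Hölder conjugate), ∫_D |⟨f(t), r(t)⟩| |ψ(t)| w(t) dμ(t) ≤ C ‖f‖_{L^p(W)} ‖ψ‖_{L^q(w)}. -/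
/-!
Since `W^{1/p}` is Hermitian with inverse `W^{-1/p}`, one has
`⟨f, r⟩ = ⟨W^{1/p} f, W^{-1/p} r⟩`, so Cauchy–Schwarz in `ℂ^N` and the bound on `W^{-1/p} r` give
`w^{1/p} |⟨f, r⟩| ≤ C ‖W^{1/p} f‖` almost everywhere. Hölder's inequality for the measure `w dμ`,
applied to `|⟨f, r⟩|` and `|ψ|`, then yields the estimate.
-/

open MeasureTheory ENNReal ComplexInnerProductSpace
open scoped ComplexOrder

section MatrixPower

variable {N : ℕ} (A : Matrix (Fin N) (Fin N) ℂ)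

theorem mpow_eq_cfc (s : ℝ) : mpow A s = cfc (fun x : ℝ => x ^ s) A := by
  by_cases hA : A.IsHermitian
  · rw [mpow, dif_pos hA, hA.cfc_eq]
  · rw [mpow, dif_neg hA]
    exact (cfc_apply_of_not_predicate A hA).symm

theorem isHermitian_mpow (s : ℝ) : (mpow A s).IsHermitian := by
  rw [mpow_eq_cfc]
  exact cfc_predicate (R := ℝ) _ A

variable {A}

theorem mpow_zero (hA : A.IsHermitian) : mpow A 0 = 1 := by
  simp only [mpow_eq_cfc, Real.rpow_zero]
  exact cfc_const_one ℝ A hA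

theorem mpow_add (hA : A.PosDef) (s t : ℝ) : mpow A (s + t) = mpow A s * mpow A t := by
  have hcont (u : ℝ) : ContinuousOn (fun x : ℝ => x ^ u) (spectrum ℝ A) :=
    Matrix.finite_real_spectrum.continuousOn _
  rw [mpow_eq_cfc, mpow_eq_cfc, mpow_eq_cfc, ← cfc_mul _ _ A (hcont s) (hcont t)]
  refine cfc_congr fun x hx => ?_
  obtain ⟨i, rfl⟩ := hA.isHermitian.spectrum_real_eq_range_eigenvalues ▸ hx
  exact Real.rpow_add (hA.eigenvalues_pos i) s t

theorem mpow_mul_mpow_neg (hA : A.PosDef) (s : ℝ) : mpow A s * mpow A (-s) = 1 := by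
  rw [← mpow_add hA, add_neg_cancel, mpow_zero hA.isHermitian]

theorem inner_mpow_mpow_neg (hA : A.PosDef) (s : ℝ) (x y : EuclideanSpace ℂ (Fin N)) :
    ⟪Matrix.toEuclideanLin (mpow A s) x, Matrix.toEuclideanLin (mpow A (-s)) y⟫ = ⟪x, y⟫ := by
  have hsymm := Matrix.isSymmetric_toEuclideanLin_iff.2 (isHermitian_mpow A s)
  rw [hsymm, ← LinearMap.comp_apply, ← Matrix.toLpLin_mul_same, mpow_mul_mpow_neg hA,
    Matrix.toLpLin_one, LinearMap.id_apply]

theorem norm_inner_le_norm_mpow_mul_norm_mpow_neg (hA : A.PosDef) (s : ℝ)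
    (x y : EuclideanSpace ℂ (Fin N)) :
    ‖(⟪x, y⟫ : ℂ)‖ ≤
      ‖Matrix.toEuclideanLin (mpow A s) x‖ * ‖Matrix.toEuclideanLin (mpow A (-s)) y‖ := by
  rw [← inner_mpow_mpow_neg hA s x y]
  exact norm_inner_le_norm _ _

theorem mul_norm_inner_le_of_mul_norm_mpow_neg_le (hA : A.PosDef) {s a C : ℝ} (ha : 0 ≤ a)
    (x : EuclideanSpace ℂ (Fin N)) {y : EuclideanSpace ℂ (Fin N)}
    (hy : a * ‖Matrix.toEuclideanLin (mpow A (-s)) y‖ ≤ C) :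
    a * ‖(⟪x, y⟫ : ℂ)‖ ≤ C * ‖Matrix.toEuclideanLin (mpow A s) x‖ :=
  calc a * ‖(⟪x, y⟫ : ℂ)‖
      ≤ a * (‖Matrix.toEuclideanLin (mpow A s) x‖ *
          ‖Matrix.toEuclideanLin (mpow A (-s)) y‖) := by
        gcongr
        exact norm_inner_le_norm_mpow_mul_norm_mpow_neg hA s x y
    _ = a * ‖Matrix.toEuclideanLin (mpow A (-s)) y‖ *
          ‖Matrix.toEuclideanLin (mpow A s) x‖ := by ring
    _ ≤ C * ‖Matrix.toEuclideanLin (mpow A s) x‖ := by gcongr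

end MatrixPower

section WeightedHolder

open scoped NNReal

variable {α : Type*} [MeasurableSpace α] {μ : Measure α} {p q : ℝ} {u v ω : α → ℝ≥0∞}

theorem lintegral_mul_mul_le_weighted_Lp_mul_Lq (hpq : p.HolderConjugate q)
    (hu : AEMeasurable u μ) (hv : AEMeasurable v μ) (hω : AEMeasurable ω μ) :
    ∫⁻ t, u t * v t * ω t ∂μ ≤
      (∫⁻ t, u t ^ p * ω t ∂μ) ^ (1 / p) * (∫⁻ t, v t ^ q * ω t ∂μ) ^ (1 / q) := by
  have lintegral_weight {g : α → ℝ≥0∞} (hg : AEMeasurable g μ) :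
      ∫⁻ t, g t * ω t ∂μ = ∫⁻ t, g t ∂μ.withDensity ω := by
    simp only [lintegral_withDensity_eq_lintegral_mul₀ hω hg, Pi.mul_apply, mul_comm]
  have hac := withDensity_absolutelyContinuous μ ω
  rw [lintegral_weight (g := fun t => u t * v t) (hu.mul hv), lintegral_weight (hu.pow_const p),
    lintegral_weight (hv.pow_const q)]
  exact ENNReal.lintegral_mul_le_Lp_mul_Lq _ hpq (hu.mono_ac hac) (hv.mono_ac hac)

theorem weighted_Lp_le_of_ae_rpow_mul_le {F : α → ℝ≥0∞} {c : ℝ≥0} (hp : 0 < p)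
    (h : ∀ᵐ t ∂μ, ω t ^ (1 / p) * u t ≤ c * F t) :
    (∫⁻ t, u t ^ p * ω t ∂μ) ^ (1 / p) ≤ c * (∫⁻ t, F t ^ p ∂μ) ^ (1 / p) := by
  have weight_eq (t : α) : u t ^ p * ω t = (ω t ^ (1 / p) * u t) ^ p := by
    rw [ENNReal.mul_rpow_of_nonneg _ _ hp.le, ← ENNReal.rpow_mul, one_div_mul_cancel hp.ne',
      ENNReal.rpow_one, mul_comm]
  simp only [weight_eq]
  exact eLpNorm'_le_nnreal_smul_eLpNorm'_of_ae_le_mul'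
    (f := fun t => ω t ^ (1 / p) * u t) (g := F) h hp

end WeightedHolder

theorem measurable_of_measurable_inner_single {α ι 𝕜 : Type*} [MeasurableSpace α] [Fintype ι]
    [DecidableEq ι] [RCLike 𝕜] {f : α → EuclideanSpace 𝕜 ι}
    (hf : ∀ i, Measurable fun t => inner 𝕜 (EuclideanSpace.single i (1 : 𝕜)) (f t)) :
    Measurable f := by
  simp only [EuclideanSpace.inner_single_left, map_one, one_mul] at hf
  exact (WithLp.measurable_toLp 2 _).comp (measurable_pi_lambda _ hf)

theorem projection_duality_estimate_general
    {N : ℕ} {D : Type*} [MeasurableSpace D] {μ : Measure D}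
    {p q : ℝ} (hpq : p.HolderConjugate q)
    {W : D → Matrix (Fin N) (Fin N) ℂ} (hW : ∀ᵐ t ∂μ, (W t).PosDef)
    {w : D → ℝ} (hw : AEMeasurable w μ) (hw_nonneg : ∀ᵐ t ∂μ, 0 ≤ w t)
    {r : D → EuclideanSpace ℂ (Fin N)} (hr : AEMeasurable r μ) {C : ℝ}
    (hbound : ∀ᵐ t ∂μ,
      (w t) ^ (1 / p) * ‖Matrix.toEuclideanLin (mpow (W t) (-(1 / p))) (r t)‖ ≤ C)
    {f : D → EuclideanSpace ℂ (Fin N)} (hf : AEMeasurable f μ)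
    {ψ : D → ℂ} (hψ : AEMeasurable ψ μ) :
    ∫⁻ t, ‖(⟪f t, r t⟫ : ℂ)‖ₑ * ‖ψ t‖ₑ * ENNReal.ofReal (w t) ∂μ
      ≤ ENNReal.ofReal C *
        (∫⁻ t, ‖Matrix.toEuclideanLin (mpow (W t) (1 / p)) (f t)‖ₑ ^ p ∂μ) ^ (1 / p) *
        (∫⁻ t, ‖ψ t‖ₑ ^ q * ENNReal.ofReal (w t) ∂μ) ^ (1 / q) := by
  have inner_bound : ∀ᵐ t ∂μ, ENNReal.ofReal (w t) ^ (1 / p) * ‖(⟪f t, r t⟫ : ℂ)‖ₑ ≤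
      ENNReal.ofReal C * ‖Matrix.toEuclideanLin (mpow (W t) (1 / p)) (f t)‖ₑ := by
    filter_upwards [hW, hw_nonneg, hbound] with t hWt hwt hbt
    rw [ENNReal.ofReal_rpow_of_nonneg hwt hpq.one_div_nonneg, ← ofReal_norm, ← ofReal_norm,
      ← ENNReal.ofReal_mul' (norm_nonneg _), ← ENNReal.ofReal_mul' (norm_nonneg _)]
    exact ENNReal.ofReal_le_ofReal
      (mul_norm_inner_le_of_mul_norm_mpow_neg_le hWt (Real.rpow_nonneg hwt _) (f t) hbt)
  refine (lintegral_mul_mul_le_weighted_Lp_mul_Lq hpq (hf.inner hr).enorm hψ.enorm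
    hw.ennreal_ofReal).trans ?_
  gcongr
  exact weighted_Lp_le_of_ae_rpow_mul_le hpq.pos inner_bound

/-- Duality form of the sufficiency direction: if `w^{1/p}‖W^{−1/p}r‖ ≤ C` a.e. then
`∫ |⟨f,r⟩||ψ| w ≤ C‖f‖_{L^p(W)}‖ψ‖_{L^q(w)}`. -/
theorem projection_duality_estimate
    {N : ℕ} {D : Type*} [MeasurableSpace D] (μ : Measure D)
    (p q : ℝ) (hp : 1 < p) (hpq : 1 / p + 1 / q = 1)
    (W : D → Matrix (Fin N) (Fin N) ℂ)
    (hWmeas : ∀ i j, Measurable fun t => W t i j)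
    (hWpos : ∀ᵐ t ∂μ, (W t).PosDef)
    (w : D → ℝ) (hwmeas : Measurable w) (hwpos : ∀ᵐ t ∂μ, 0 < w t)
    (r : D → EuclideanSpace ℂ (Fin N))
    (hrmeas : ∀ k, Measurable fun t => (⟪EuclideanSpace.single k (1 : ℂ), r t⟫ : ℂ))
    (hr : ∀ᵐ t ∂μ, ‖r t‖ = 1)
    (C : ℝ)
    (hbound : ∀ᵐ t ∂μ,
      (w t) ^ (1 / p) * ‖Matrix.toEuclideanLin (mpow (W t) (-(1 / p))) (r t)‖ ≤ C)
    (f : D → EuclideanSpace ℂ (Fin N))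
    (hfmeas : ∀ k, Measurable fun t => (⟪EuclideanSpace.single k (1 : ℂ), f t⟫ : ℂ))
    (ψ : D → ℂ) (hψmeas : Measurable ψ) :
    ∫⁻ t, (‖(⟪f t, r t⟫ : ℂ)‖₊ : ℝ≥0∞) * (‖ψ t‖₊ : ℝ≥0∞) * ENNReal.ofReal (w t) ∂μ
      ≤ ENNReal.ofReal C *
        (∫⁻ t, (‖Matrix.toEuclideanLin (mpow (W t) (1 / p)) (f t)‖₊ : ℝ≥0∞) ^ p ∂μ)
          ^ (1 / p) *
        (∫⁻ t, (‖ψ t‖₊ : ℝ≥0∞) ^ q * ENNReal.ofReal (w t) ∂μ) ^ (1 / q) := by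
  exact projection_duality_estimate_general
    (Real.holderConjugate_iff.2 ⟨hp, by simpa only [one_div] using hpq⟩)
    hWpos hwmeas.aemeasurable (hwpos.mono fun _ => le_of_lt)
    (measurable_of_measurable_inner_single hrmeas).aemeasurable hbound
    (measurable_of_measurable_inner_single hfmeas).aemeasurable hψmeas.aemeasurable
end
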